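/- Let G be a finite simple graph having a connected component whose vertex set S induces a subgraph isomorphic to T₆ (so no edge of G joins S to the rest of G). Then the maximum order of an induced forest of G equals the maximum order of an induced forest of the graph obtained from G by deleting S, plus 4. -/

import Mathlib

/-- The graph `T₆`: the complete bipartite graph `K_{3,3}` with parts
`{inl 0, inl 1, inl 2}` and `{inr 0, inr 1, inr 2}`, minus the edge `inl 2 — inr 2`. -/
def T6graph : SimpleGraph (Fin 3 ⊕ Fin 3) where
  Adj x y := (∃ i j, x = Sum.inl i ∧ y = Sum.inr j ∧ ¬(i = 2 ∧ j = 2)) ∨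
             (∃ i j, x = Sum.inr j ∧ y = Sum.inl i ∧ ¬(i = 2 ∧ j = 2))
  symm := by
    constructor
    rintro x y (⟨i, j, h1, h2, h3⟩ | ⟨i, j, h1, h2, h3⟩)
    · exact Or.inr ⟨i, j, h2, h1, h3⟩
    · exact Or.inl ⟨i, j, h2, h1, h3⟩
  loopless := by
    constructor
    rintro x (⟨i, j, h1, h2, -⟩ | ⟨i, j, h1, h2, -⟩) <;> simp_all

/-- The maximum order of an induced forest of `G`. -/
noncomputable def maxIndForest {V : Type*} (G : SimpleGraph V) : ℕ :=
  sSup {n : ℕ | ∃ s : Set V, (G.induce s).IsAcyclic ∧ s.ncard = n}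

theorem T6aux_le {V : Type*} [Finite V] (G : SimpleGraph V) (s : Set V)
    (h : (G.induce s).IsAcyclic) : s.ncard ≤ maxIndForest G := by
  refine le_csSup ⟨Nat.card V, ?_⟩ ⟨s, h, rfl⟩
  rintro n ⟨t, -, rfl⟩
  exact Set.ncard_le_card t

theorem T6aux_attained {V : Type*} [Finite V] (G : SimpleGraph V) :
    ∃ s : Set V, (G.induce s).IsAcyclic ∧ s.ncard = maxIndForest G := by
  refine Nat.sSup_mem (s := {n : ℕ | ∃ s : Set V, (G.induce s).IsAcyclic ∧ s.ncard = n})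
    ⟨0, ∅, SimpleGraph.IsAcyclic.of_subsingleton, by simp⟩ ⟨Nat.card V, ?_⟩
  rintro n ⟨t, -, rfl⟩
  exact Set.ncard_le_card t

theorem T6aux_iff {V : Type*} (G : SimpleGraph V) (t : Set V) :
    (G.induce t).IsAcyclic ↔
      ∀ (u : V) (c : G.Walk u u), c.IsCycle → ¬ ∀ x ∈ c.support, x ∈ t := by
  constructor
  · intro h u c hc hx
    refine h (c.induce t hx) ?_
    rw [← SimpleGraph.Walk.isCycle_map_iff_of_injective
      (f := (SimpleGraph.Embedding.induce (G := G) t).toHom)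
      (SimpleGraph.Embedding.induce (G := G) t).injective]
    simpa using hc
  · intro h u c hc
    refine h _ (c.map (SimpleGraph.Embedding.induce t).toHom)
      (hc.map (SimpleGraph.Embedding.induce (G := G) t).injective) ?_
    intro x hx
    rw [SimpleGraph.Walk.support_map, List.mem_map] at hx
    obtain ⟨y, -, rfl⟩ := hx
    exact y.2

theorem T6aux_side {V : Type*} (G : SimpleGraph V) (S : Set V)
    (hcomp : ∀ u v, G.Adj u v → (u ∈ S ↔ v ∈ S)) {u v : V} (c : G.Walk u v) :
    ∀ x ∈ c.support, (x ∈ S ↔ u ∈ S) := by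
  induction c with
  | nil => simp
  | cons h p ih =>
    intro x hx
    rw [SimpleGraph.Walk.support_cons, List.mem_cons] at hx
    rcases hx with rfl | hx
    · rfl
    · rw [ih x hx, hcomp _ _ h]

theorem T6aux_no_four {V : Type*} (G : SimpleGraph V) (h : G.IsAcyclic) (a b c d : V)
    (hac : a ≠ c) (hbd : b ≠ d) (h1 : G.Adj a b) (h2 : G.Adj b c) (h3 : G.Adj c d)
    (h4 : G.Adj d a) : False := by
  refine h (.cons h1 (.cons h2 (.cons h3 (.cons h4 .nil)))) ?_
  rw [SimpleGraph.Walk.cons_isCycle_iff]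
  have := h1.ne; have := h2.ne; have := h3.ne; have := h4.ne
  simp [SimpleGraph.Walk.cons_isPath_iff]
  grind

theorem T6aux_star {V : Type*} (G : SimpleGraph V) (z : V)
    (h : ∀ x y, G.Adj x y → x = z ∨ y = z) : G.IsAcyclic := by
  have key : ∀ v, G.Adj v z → ¬ (G.deleteEdges {s(v, z)}).Reachable v z := by
    rintro v hv ⟨w⟩
    cases w with
    | nil => exact hv.ne rfl
    | cons h' p =>
      rw [SimpleGraph.deleteEdges_adj] at h'
      rcases h _ _ h'.1 with rfl | rfl
      · exact hv.ne rfl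
      · exact h'.2 rfl
  rw [SimpleGraph.isAcyclic_iff_forall_adj_isBridge]
  intro v w hvw
  rcases h _ _ hvw with rfl | rfl
  · rw [Sym2.eq_swap, SimpleGraph.isBridge_iff]
    exact key _ hvw.symm
  · rw [SimpleGraph.isBridge_iff]
    exact key _ hvw

theorem T6aux_dec : ∀ v : Fin 3 ⊕ Fin 3, ∃ a b c d : Fin 3 ⊕ Fin 3,
    a ≠ v ∧ b ≠ v ∧ c ≠ v ∧ d ≠ v ∧ a ≠ c ∧ b ≠ d ∧
    T6graph.Adj a b ∧ T6graph.Adj b c ∧ T6graph.Adj c d ∧ T6graph.Adj d a := by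
  have key : ∀ v : Fin 3 ⊕ Fin 3, ∃ i j k l : Fin 3,
      Sum.inl i ≠ v ∧ Sum.inr j ≠ v ∧ Sum.inl k ≠ v ∧ Sum.inr l ≠ v ∧ i ≠ k ∧ j ≠ l ∧
      ¬ (i = 2 ∧ j = 2) ∧ ¬ (k = 2 ∧ j = 2) ∧ ¬ (k = 2 ∧ l = 2) ∧ ¬ (i = 2 ∧ l = 2) := by
    have two : ∀ v : Fin 3, ∃ i k : Fin 3, i ≠ v ∧ k ≠ v ∧ i ≠ k := by decide
    rintro (v | v)
    · obtain ⟨i, k, hi, hk, hik⟩ := two v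
      exact ⟨i, 0, k, 1, by simp [hi, hk, hik]⟩
    · obtain ⟨i, k, hi, hk, hik⟩ := two v
      exact ⟨0, i, 1, k, by simp [hi, hk, hik]⟩
  intro v
  obtain ⟨i, j, k, l, h1, h2, h3, h4, h5, h6, h7, h8, h9, h10⟩ := key v
  exact ⟨.inl i, .inr j, .inl k, .inr l, h1, h2, h3, h4, by simpa using h5, by simpa using h6,
    Or.inl ⟨_, _, rfl, rfl, h7⟩, Or.inr ⟨_, _, rfl, rfl, h8⟩, Or.inl ⟨_, _, rfl, rfl, h9⟩,
    Or.inr ⟨_, _, rfl, rfl, h10⟩⟩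

theorem T6aux_upper {V : Type*} [Finite V] (G : SimpleGraph V) (S : Set V)
    (e : (G.induce S) ≃g T6graph) (t : Set V) (h : (G.induce t).IsAcyclic) :
    (t ∩ S).ncard ≤ 4 := by
  by_contra hlt
  have hS : S.ncard = 6 := by
    rw [← Nat.card_coe_set_eq, Nat.card_congr e.toEquiv]; simp
  have hsum := Set.ncard_inter_add_ncard_sdiff_eq_ncard S t
  rw [Set.inter_comm] at hsum
  have h1 : (S \ t).ncard ≤ 1 := by omega
  rw [Set.ncard_le_one] at h1
  have hv : ∃ v : S, ∀ x : S, x ≠ v → (x : V) ∈ t := by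
    by_cases hne : (S \ t).Nonempty
    · obtain ⟨v, hv⟩ := hne
      refine ⟨⟨v, hv.1⟩, fun x hx => ?_⟩
      by_contra hxt
      exact hx (Subtype.ext (h1 _ ⟨x.2, hxt⟩ _ hv))
    · refine ⟨e.symm (.inl 0), fun x _ => ?_⟩
      by_contra hxt
      exact hne ⟨x, x.2, hxt⟩
  obtain ⟨v, hv⟩ := hv
  obtain ⟨a, b, c, d, ha, hb, hc, hd, hac, hbd, h1, h2, h3, h4⟩ := T6aux_dec (e v)
  have hm : ∀ a, a ≠ e v → ((e.symm a : S) : V) ∈ t := by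
    intro a ha
    refine hv _ fun h => ha ?_
    rw [← h]; simp
  have had : ∀ a b, T6graph.Adj a b → G.Adj (e.symm a : S) (e.symm b : S) := by
    intro a b hab
    exact (e.symm.map_adj_iff).2 hab
  refine T6aux_no_four _ h ⟨_, hm a ha⟩ ⟨_, hm b hb⟩ ⟨_, hm c hc⟩ ⟨_, hm d hd⟩ ?_ ?_
    (had _ _ h1) (had _ _ h2) (had _ _ h3) (had _ _ h4)
  · intro h; exact hac (e.symm.injective (Subtype.ext (congrArg (fun z => z.1) h)))
  · intro h; exact hbd (e.symm.injective (Subtype.ext (congrArg (fun z => z.1) h)))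

theorem T6aux_lower {V : Type*} [Finite V] (G : SimpleGraph V) (S : Set V)
    (e : (G.induce S) ≃g T6graph) :
    ∃ t ⊆ S, (G.induce t).IsAcyclic ∧ t.ncard = 4 := by
  let f : Fin 3 ⊕ Fin 3 → V := fun a => (e.symm a : S)
  have hf : Function.Injective f := Subtype.val_injective.comp e.symm.injective
  have had : ∀ a b, G.Adj (f a) (f b) → T6graph.Adj a b := by
    intro a b hab
    exact (e.symm.map_adj_iff).1 hab
  let A : Finset (Fin 3 ⊕ Fin 3) := {.inl 0, .inr 0, .inr 1, .inr 2}
  refine ⟨f '' (A : Set (Fin 3 ⊕ Fin 3)), ?_, ?_, ?_⟩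
  · rintro _ ⟨a, -, rfl⟩
    exact (e.symm a).2
  · refine T6aux_star _ ⟨f (.inl 0), .inl 0, by simp [A], rfl⟩ ?_
    rintro ⟨_, a, ha, rfl⟩ ⟨_, b, hb, rfl⟩ hab
    have hab' := had a b hab
    have hA : ∀ a ∈ A, a = .inl 0 ∨ ∃ j, a = .inr j := by decide
    rcases hA a ha with rfl | ⟨j, rfl⟩
    · left; rfl
    rcases hA b hb with rfl | ⟨k, rfl⟩
    · right; rfl
    rcases hab' with ⟨_, _, h1, h2, _⟩ | ⟨_, _, h1, h2, _⟩ <;> simp_all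
  · rw [Set.ncard_image_of_injective _ hf, Set.ncard_coe_finset]
    rfl

/-- If `S` is the vertex set of a connected component of `G` inducing a copy of `T₆`,
then the maximum order of an induced forest of `G` equals that of `G` with `S`
deleted, plus 4. -/
theorem maxIndForest_of_T6_component {V : Type*} [Fintype V] (G : SimpleGraph V)
    (S : Set V)
    (hiso : Nonempty ((G.induce S) ≃g T6graph))
    (hcomp : ∀ u ∈ S, ∀ v ∉ S, ¬ G.Adj u v) :
    maxIndForest G = maxIndForest (G.induce Sᶜ) + 4 := by
  obtain ⟨e⟩ := hiso
  have hc : ∀ u v, G.Adj u v → (u ∈ S ↔ v ∈ S) := by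
    intro u v h
    constructor
    · intro hu
      by_contra hv
      exact hcomp u hu v hv h
    · intro hv
      by_contra hu
      exact hcomp v hv u hu h.symm
  apply le_antisymm
  · obtain ⟨t, ht, hcard⟩ := T6aux_attained G
    have h4 := T6aux_upper G S e t ht
    let s : Set (Sᶜ : Set V) := Subtype.val ⁻¹' t
    have hs : ((G.induce Sᶜ).induce s).IsAcyclic := by
      let f : (G.induce Sᶜ).induce s →g G.induce t :=
        ⟨fun x => ⟨x.1.1, x.2⟩, fun h => h⟩
      refine ht.comap f ?_
      intro x y hxy
      exact Subtype.ext (Subtype.ext (congrArg (fun z => z.1) hxy))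
    have hle := T6aux_le _ s hs
    have hsc : s.ncard = (t \ S).ncard := by
      rw [← Set.ncard_image_of_injective s Subtype.val_injective,
        Subtype.image_preimage_coe, Set.sdiff_eq, Set.inter_comm]
    have := Set.ncard_inter_add_ncard_sdiff_eq_ncard t S
    omega
  · obtain ⟨s, hs, hcard⟩ := T6aux_attained (G.induce Sᶜ)
    obtain ⟨t, htS, ht, ht4⟩ := T6aux_lower G S e
    have hs' : (G.induce (Subtype.val '' s)).IsAcyclic := by
      have hm : ∀ x : (Subtype.val '' s : Set V), ∃ h : x.1 ∈ Sᶜ, (⟨x.1, h⟩ : (Sᶜ : Set V)) ∈ s := by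
        rintro ⟨_, y, hy, rfl⟩
        exact ⟨y.2, hy⟩
      let f : G.induce (Subtype.val '' s) →g (G.induce Sᶜ).induce s :=
        ⟨fun x => ⟨⟨x.1, (hm x).1⟩, (hm x).2⟩, fun h => h⟩
      refine hs.comap f ?_
      intro x y hxy
      exact Subtype.ext (congrArg (fun z => z.1.1) hxy)
    have hsS : ∀ x ∈ (Subtype.val '' s : Set V), x ∉ S := by
      rintro _ ⟨y, -, rfl⟩
      exact y.2
    have hu : (G.induce (Subtype.val '' s ∪ t)).IsAcyclic := by
      rw [T6aux_iff] at hs' ht ⊢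
      intro u c hcyc hsup
      have hside := T6aux_side G S hc c
      by_cases huS : u ∈ S
      · refine ht u c hcyc fun x hx => ?_
        rcases hsup x hx with h | h
        · exact absurd ((hside x hx).2 huS) (hsS x h)
        · exact h
      · refine hs' u c hcyc fun x hx => ?_
        rcases hsup x hx with h | h
        · exact h
        · exact absurd ((hside x hx).1 (htS h)) huS
    have hle := T6aux_le G _ hu
    rw [Set.ncard_union_eq (Set.disjoint_left.2 fun x hx hxt => hsS x hx (htS hxt)),
      Set.ncard_image_of_injective s Subtype.val_injective] at hle
    omega
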